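/- Let k be a field, m ≥ 1 an integer, and let Γ(m) be the subring of the m×m matrix ring M_m(k[[x]]) over the formal power series ring k[[x]] consisting of all matrices whose entries strictly below the diagonal lie in the maximal ideal (x) of k[[x]]. Then M_m(k[[x]]), regarded as a left Γ(m)-module via the inclusion Γ(m) ⊆ M_m(k[[x]]), is a projective Γ(m)-module. -/

import Mathlib

/-- The subring `Γ(m)` of `M_m(k[[x]])` consisting of the matrices whose entries strictly
below the diagonal lie in the maximal ideal `(x)` of `k[[x]]`, i.e. have zero constant
coefficient. -/
noncomputable def Gamma (k : Type*) [Field k] (m : ℕ) :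
    Subring (Matrix (Fin m) (Fin m) (PowerSeries k)) where
  carrier := {A | ∀ i j : Fin m, j < i → PowerSeries.constantCoeff (A i j) = 0}
  mul_mem' := by
    intro A B hA hB
    have hA' : ∀ i j : Fin m, j < i → PowerSeries.constantCoeff (A i j) = 0 := hA
    have hB' : ∀ i j : Fin m, j < i → PowerSeries.constantCoeff (B i j) = 0 := hB
    intro i j hji
    show PowerSeries.constantCoeff ((A * B) i j) = 0
    rw [Matrix.mul_apply, map_sum]
    refine Finset.sum_eq_zero fun l _ => ?_
    rw [map_mul]
    rcases le_or_gt l j with h | h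
    · rw [hA' i l (h.trans_lt hji), zero_mul]
    · rw [hB' l j h, mul_zero]
  one_mem' := by
    intro i j hji
    show PowerSeries.constantCoeff ((1 : Matrix (Fin m) (Fin m) (PowerSeries k)) i j) = 0
    rw [Matrix.one_apply_ne hji.ne', map_zero]
  add_mem' := by
    intro A B hA hB
    have hA' : ∀ i j : Fin m, j < i → PowerSeries.constantCoeff (A i j) = 0 := hA
    have hB' : ∀ i j : Fin m, j < i → PowerSeries.constantCoeff (B i j) = 0 := hB
    intro i j hji
    show PowerSeries.constantCoeff ((A + B) i j) = 0
    rw [Matrix.add_apply, map_add, hA' i j hji, hB' i j hji, add_zero]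
  zero_mem' := by
    intro i j hji
    show PowerSeries.constantCoeff ((0 : Matrix (Fin m) (Fin m) (PowerSeries k)) i j) = 0
    rw [Matrix.zero_apply, map_zero]
  neg_mem' := by
    intro A hA
    have hA' : ∀ i j : Fin m, j < i → PowerSeries.constantCoeff (A i j) = 0 := hA
    intro i j hji
    show PowerSeries.constantCoeff ((-A) i j) = 0
    rw [Matrix.neg_apply, map_neg, hA' i j hji, neg_zero]

/-- If `1 = ∑ j, a j * b j` in `R` and every left ideal `R * a j` is contained in the subring `S`,
then `R` is projective as a left `S`-module. -/
theorem Subring.projective_compHom_subtype {R ι : Type*} [Ring R] [Fintype ι] (S : Subring R)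
    (a b : ι → R) (ha : ∀ r j, r * a j ∈ S) (hab : ∑ j, a j * b j = 1) :
    @Module.Projective S _ R _ (Module.compHom R S.subtype) := by
  let : Module S R := Module.compHom R S.subtype
  let s : R →ₗ[S] (ι → S) :=
    { toFun := fun r j => ⟨r * a j, ha r j⟩
      map_add' := fun r t => funext fun j => Subtype.ext (add_mul r t _)
      map_smul' := fun c r => funext fun j => Subtype.ext (mul_assoc (c : R) r _) }
  let f : (ι → S) →ₗ[S] R :=
    { toFun := fun t => ∑ j, (t j : R) * b j
      map_add' := fun t u => by simp [add_mul, Finset.sum_add_distrib]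
      map_smul' := fun c t => by
        change ∑ j, (c : R) * t j * b j = c * ∑ j, (t j : R) * b j
        simp_rw [Finset.mul_sum, mul_assoc] }
  refine Module.Projective.of_split s f (LinearMap.ext fun r => ?_)
  change ∑ j, r * a j * b j = r
  simp_rw [mul_assoc, ← Finset.mul_sum, hab, mul_one]

/-- Right multiplication by the matrix unit `E_{j,l}` lands in `Γ(m)` when `l` is the last index:
only the last column of the product can be nonzero, and no entry of it is below the diagonal. -/
theorem mul_single_mem_Gamma {k : Type*} [Field k] {m : ℕ} {l : Fin m} (hl : ∀ i, i ≤ l)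
    (A : Matrix (Fin m) (Fin m) (PowerSeries k)) (j : Fin m) :
    A * Matrix.single j l 1 ∈ Gamma k m := by
  intro a b hba
  rw [Matrix.mul_single_apply_of_ne _ _ _ _ _ (hba.trans_le (hl a)).ne, map_zero]

/-- For a field `k` and `m ≥ 1`, the matrix ring `M_m(k[[x]])`, regarded
as a left `Γ(m)`-module via left multiplication by elements of the subring `Γ(m)`, is a
projective `Γ(m)`-module. -/
theorem stmt_7 (k : Type*) [Field k] (m : ℕ) (hm : 1 ≤ m) :
    @Module.Projective (Gamma k m) _ (Matrix (Fin m) (Fin m) (PowerSeries k)) _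
      (Module.compHom (Matrix (Fin m) (Fin m) (PowerSeries k)) (Gamma k m).subtype) := by
  let l : Fin m := ⟨m - 1, by omega⟩
  have hl (i : Fin m) : i ≤ l := Fin.le_def.2 (Nat.le_sub_one_of_lt i.isLt)
  refine (Gamma k m).projective_compHom_subtype (fun j => Matrix.single j l 1)
    (fun j => Matrix.single l j 1) (mul_single_mem_Gamma hl) ?_
  simp_rw [Matrix.single_mul_single_same, mul_one, Matrix.sum_single_one]
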